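/- arXiv:2012.11872 — 2 statements merged into one kernel-verified Lean document; each statement's English description precedes it below -/
import Mathlib

section
/- Let (α;β) and (α';β') be directed weak bicompositions. Then every bicomposition occurring in the quasi-shuffle product (α;β)*(α';β'), taken over the monoid ℕ×ℕ with componentwise addition and viewing a bicomposition as the list of its columns, is again a directed weak bicomposition (its second rows have positive entries), and for every real t≥0 and every z∈ℂ with Re z<0, φ(α;β)(t,z) · φ(α';β')(t,z) = φ((α;β)*(α';β'))(t,z) as formal power series over ℂ, where φ(·)(t,z) is extended ℚ-linearly to linear combinations of directed weak bicompositions. -/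
open Finset

/-- quasi-shuffle product on the free ℚ-module on lists over an additive commutative monoid -/
noncomputable def qsh {A : Type} [AddCommMonoid A] : List A → List A → (List A →₀ ℚ)
  | [], b => Finsupp.single b 1
  | a :: a', [] => Finsupp.single (a :: a') 1
  | a :: a', b :: b' =>
      (qsh a' (b :: b')).mapDomain (a :: ·) +
      (qsh (a :: a') b').mapDomain (b :: ·) +
      (qsh a' b').mapDomain ((a + b) :: ·)
termination_by a b => a.length + b.length

/-- the regularization φ(α;β)(t,z) of a directed weak bicomposition (list of columns):
its coefficient at a monomial μ is the sum of exp(((i_1+t)β_1+⋯+(i_k+t)β_k)z) over all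
strictly increasing tuples I = (i_1 < ⋯ < i_k) with x_I^α = μ. -/
noncomputable def phiPS (c : List (ℕ × ℕ)) (t : ℝ) (z : ℂ) : MvPowerSeries ℕ+ ℂ :=
  fun μ => ∑' I : {I : Fin c.length → ℕ+ // StrictMono I ∧
      (∑ j, Finsupp.single (I j) (c.get j).1) = μ},
    Complex.exp ((∑ j, (((I.1 j : ℕ) : ℂ) + (t : ℂ)) * ((c.get j).2 : ℂ)) * z)

/-!
Restricting the increasing tuples in `phiPS c t z` to a finite set `s` of indices gives a finite sum
of products of weights `w i (a, b) = exp ((i + t) b z) x_i ^ a`, which are multiplicative in the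
column `(a, b)`. Adjoining to `s` a new least index `i` splits such a sum according to whether the
first entry of the tuple is `i`, and the quasi-shuffle recursion is exactly what makes the product
rule survive this step. The identity for `phiPS` is the limit over `s`, in the topology of
coefficientwise convergence.
-/

theorem forall_mem_of_mem_support_qsh {A : Type} [AddCommMonoid A] {P : A → Prop}
    (hP : ∀ a b, P a → P b → P (a + b)) {c c' : List A} (hc : ∀ a ∈ c, P a)
    (hc' : ∀ a ∈ c', P a) : ∀ d ∈ (qsh c c').support, ∀ a ∈ d, P a := by
  classical
  have cons_image {a : A} {f : List A →₀ ℚ} (ha : P a) (hf : ∀ d ∈ f.support, ∀ b ∈ d, P b) :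
      ∀ d ∈ (f.mapDomain (a :: ·)).support, ∀ b ∈ d, P b := by
    intro d hd
    obtain ⟨e, he, rfl⟩ := mem_image.1 (Finsupp.mapDomain_support hd)
    exact List.forall_mem_cons.2 ⟨ha, hf e he⟩
  induction c, c' using qsh.induct with
  | case1 c' =>
    intro d hd
    rw [qsh] at hd
    rwa [mem_singleton.1 (Finsupp.support_single_subset hd)]
  | case2 a c =>
    intro d hd
    rw [qsh] at hd
    rwa [mem_singleton.1 (Finsupp.support_single_subset hd)]
  | case3 a c b c' ih_left ih_right ih_both =>
    intro d hd
    have ⟨ha, hc_tail⟩ := List.forall_mem_cons.1 hc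
    have ⟨hb, hc'_tail⟩ := List.forall_mem_cons.1 hc'
    rw [qsh] at hd
    rcases mem_union.1 (Finsupp.support_add hd) with hd | hd
    · rcases mem_union.1 (Finsupp.support_add hd) with hd | hd
      · exact cons_image ha (ih_left hc_tail hc') d hd
      · exact cons_image hb (ih_right hc hc'_tail) d hd
    · exact cons_image (hP a b ha hb) (ih_both hc_tail hc'_tail) d hd

section StrictMonoTuples

variable {ι : Type*} [LinearOrder ι]

/-- The strictly increasing `n`-tuples with entries in `s`: the index set of a truncated
quasi-symmetric sum. -/
def strictMonoTuples (s : Finset ι) (n : ℕ) : Finset (Fin n → ι) :=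
  {I ∈ Fintype.piFinset fun _ : Fin n => s | StrictMono I}

theorem mem_strictMonoTuples {s : Finset ι} {n : ℕ} {I : Fin n → ι} :
    I ∈ strictMonoTuples s n ↔ (∀ j, I j ∈ s) ∧ StrictMono I := by
  simp [strictMonoTuples]

theorem strictMonoTuples_zero (s : Finset ι) : strictMonoTuples s 0 = univ :=
  eq_univ_of_forall fun I =>
    mem_strictMonoTuples.2 ⟨fun j => j.elim0, Subsingleton.strictMono I⟩

theorem strictMonoTuples_empty_succ (n : ℕ) : strictMonoTuples (∅ : Finset ι) (n + 1) = ∅ := by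
  ext I
  simp [mem_strictMonoTuples]

theorem strictMonoTuples_insert_succ {i : ι} {s : Finset ι} (hi : ∀ j ∈ s, i < j) (n : ℕ) :
    strictMonoTuples (insert i s) (n + 1) =
      (strictMonoTuples s n).image (fun J => (Fin.cons i J : Fin (n + 1) → ι)) ∪
        strictMonoTuples s (n + 1) := by
  ext I
  obtain ⟨x, J, rfl⟩ : ∃ (x : ι) (J : Fin n → ι), I = Fin.cons x J :=
    ⟨I 0, Fin.tail I, (Fin.cons_self_tail I).symm⟩
  simp only [mem_union, mem_image, mem_strictMonoTuples, Fin.forall_fin_succ, Fin.cons_zero,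
    Fin.cons_succ, Fin.strictMono_cons, Fin.cons_inj, mem_insert]
  constructor
  · rintro ⟨⟨hx, hJ⟩, hxJ, hJ_mono⟩
    have i_le_x : i ≤ x := hx.elim Eq.ge fun hx => (hi x hx).le
    have hJ_mem (j) : J j ∈ s := (hJ j).resolve_left (i_le_x.trans_lt (hxJ j)).ne'
    rcases hx with rfl | hx
    · exact .inl ⟨J, ⟨hJ_mem, hJ_mono⟩, rfl, rfl⟩
    · exact .inr ⟨⟨hx, hJ_mem⟩, hxJ, hJ_mono⟩
  · rintro (⟨J, ⟨hJ, hJ_mono⟩, rfl, rfl⟩ | ⟨⟨hx, hJ⟩, hxJ, hJ_mono⟩)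
    · exact ⟨⟨.inl rfl, fun j => .inr (hJ j)⟩, fun j => hi _ (hJ j), hJ_mono⟩
    · exact ⟨⟨.inr hx, fun j => .inr (hJ j)⟩, hxJ, hJ_mono⟩

theorem disjoint_image_cons_strictMonoTuples {i : ι} {s : Finset ι} (hi : i ∉ s) (n : ℕ) :
    Disjoint ((strictMonoTuples s n).image (fun J => (Fin.cons i J : Fin (n + 1) → ι)))
      (strictMonoTuples s (n + 1)) := by
  refine disjoint_left.2 fun I hI hI' => hi ?_
  obtain ⟨J, -, rfl⟩ := mem_image.1 hI
  exact (mem_strictMonoTuples.1 hI').1 0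

end StrictMonoTuples

section QuasiMonomial

variable {ι R : Type*} {A : Type} [LinearOrder ι] [CommSemiring R] {w : ι → A → R}

/-- The monomial quasi-symmetric function of `c` truncated to the indices in `s`, with an arbitrary
weight `w i a` in place of the power `x_i ^ a`. -/
def quasiMonomial (w : ι → A → R) (s : Finset ι) (c : List A) : R :=
  ∑ I ∈ strictMonoTuples s c.length, ∏ j, w (I j) (c.get j)

theorem quasiMonomial_nil (s : Finset ι) : quasiMonomial w s [] = 1 := by
  simp [quasiMonomial, strictMonoTuples_zero]

theorem quasiMonomial_empty_cons (a : A) (c : List A) : quasiMonomial w ∅ (a :: c) = 0 := by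
  simp [quasiMonomial, strictMonoTuples_empty_succ]

theorem quasiMonomial_insert_cons {i : ι} {s : Finset ι} (hi : ∀ j ∈ s, i < j) (a : A)
    (c : List A) :
    quasiMonomial w (insert i s) (a :: c) =
      w i a * quasiMonomial w s c + quasiMonomial w s (a :: c) := by
  have hi_notMem : i ∉ s := fun h => (hi i h).false
  simp only [quasiMonomial, List.length_cons]
  rw [strictMonoTuples_insert_succ hi,
    sum_union (disjoint_image_cons_strictMonoTuples hi_notMem _),
    sum_image (Fin.cons_right_injective (α := fun _ => ι) i).injOn, mul_sum]
  simp [Fin.prod_univ_succ]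

theorem linearCombination_quasiMonomial_empty_mapDomain_cons [Module ℚ R] (a : A)
    (f : List A →₀ ℚ) :
    Finsupp.linearCombination ℚ (quasiMonomial w ∅) (f.mapDomain (a :: ·)) = 0 := by
  rw [Finsupp.linearCombination_mapDomain, Finsupp.linearCombination_apply]
  simp [quasiMonomial_empty_cons]

theorem linearCombination_quasiMonomial_insert_mapDomain_cons [Algebra ℚ R] {i : ι} {s : Finset ι}
    (hi : ∀ j ∈ s, i < j) (a : A) (f : List A →₀ ℚ) :
    Finsupp.linearCombination ℚ (quasiMonomial w (insert i s)) (f.mapDomain (a :: ·)) =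
      w i a * Finsupp.linearCombination ℚ (quasiMonomial w s) f +
        Finsupp.linearCombination ℚ (quasiMonomial w s) (f.mapDomain (a :: ·)) := by
  rw [Finsupp.linearCombination_mapDomain, Finsupp.linearCombination_mapDomain]
  simp only [Finsupp.linearCombination_apply, Finsupp.mul_sum, ← Finsupp.sum_add,
    Function.comp_apply, quasiMonomial_insert_cons hi, smul_add, mul_smul_comm]

theorem quasiMonomial_mul_quasiMonomial [AddCommMonoid A] [Algebra ℚ R]
    (hw : ∀ i a b, w i (a + b) = w i a * w i b) (s : Finset ι) (c c' : List A) :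
    quasiMonomial w s c * quasiMonomial w s c' =
      Finsupp.linearCombination ℚ (quasiMonomial w s) (qsh c c') := by
  induction c, c' using qsh.induct generalizing s with
  | case1 c' => simp [qsh, quasiMonomial_nil]
  | case2 a c => simp [qsh, quasiMonomial_nil]
  | case3 a c b c' ih_left ih_right ih_both =>
    induction s using Finset.induction_on_min with
    | empty =>
      simp only [qsh, map_add, linearCombination_quasiMonomial_empty_mapDomain_cons,
        quasiMonomial_empty_cons, mul_zero, add_zero]
    | insert i s hi ih =>
      calc quasiMonomial w (insert i s) (a :: c) * quasiMonomial w (insert i s) (b :: c')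
          = w i a * (quasiMonomial w s c * quasiMonomial w s (b :: c')) +
              w i b * (quasiMonomial w s (a :: c) * quasiMonomial w s c') +
              w i (a + b) * (quasiMonomial w s c * quasiMonomial w s c') +
              quasiMonomial w s (a :: c) * quasiMonomial w s (b :: c') := by
            rw [quasiMonomial_insert_cons hi, quasiMonomial_insert_cons hi, hw]
            ring
        _ = Finsupp.linearCombination ℚ (quasiMonomial w (insert i s))
              (qsh (a :: c) (b :: c')) := by
            rw [ih_left, ih_right, ih_both, ih]
            simp only [qsh, map_add, linearCombination_quasiMonomial_insert_mapDomain_cons hi]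
            ring

variable [TopologicalSpace R]

theorem tendsto_quasiMonomial {c : List A} {x : R}
    (h : HasSum ({I | StrictMono I}.indicator fun I : Fin c.length → ι =>
      ∏ j, w (I j) (c.get j)) x) :
    Filter.Tendsto (fun s => quasiMonomial w s c) Filter.atTop (nhds x) := by
  have tendsto_piFinset : Filter.Tendsto (fun s : Finset ι => Fintype.piFinset
      fun _ : Fin c.length => s) Filter.atTop Filter.atTop :=
    Filter.tendsto_atTop_finset_of_monotone
      (fun _ _ hs => Fintype.piFinset_subset _ _ fun _ => hs)
      fun I => ⟨univ.image I, by simp⟩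
  convert h.comp tendsto_piFinset using 2 with s
  simp [quasiMonomial, strictMonoTuples, sum_filter, Set.indicator_apply]

theorem mul_eq_linearCombination_qsh_of_tendsto [AddCommMonoid A] [Algebra ℚ R] [T2Space R]
    [IsTopologicalSemiring R] [ContinuousConstSMul ℚ R]
    (hw : ∀ i a b, w i (a + b) = w i a * w i b) {F : List A → R} {c c' : List A}
    (hc : Filter.Tendsto (fun s => quasiMonomial w s c) Filter.atTop (nhds (F c)))
    (hc' : Filter.Tendsto (fun s => quasiMonomial w s c') Filter.atTop (nhds (F c')))
    (hsupp : ∀ d ∈ (qsh c c').support,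
      Filter.Tendsto (fun s => quasiMonomial w s d) Filter.atTop (nhds (F d))) :
    F c * F c' = Finsupp.linearCombination ℚ F (qsh c c') := by
  refine tendsto_nhds_unique (hc.mul hc') ?_
  simp only [quasiMonomial_mul_quasiMonomial hw]
  exact tendsto_finsetSum _ fun d hd => (hsupp d hd).const_smul (qsh c c' d)

end QuasiMonomial

theorem summable_prod_apply_of_nonneg {κ : Type*} [Fintype κ] {ι : κ → Type*} {f : ∀ k, ι k → ℝ}
    (hf_nonneg : ∀ k i, 0 ≤ f k i) (hf : ∀ k, Summable (f k)) :
    Summable fun I : ∀ k, ι k => ∏ k, f k (I k) := by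
  classical
  have product_nonneg (I : ∀ k, ι k) : 0 ≤ ∏ k, f k (I k) := prod_nonneg fun k _ => hf_nonneg k _
  refine summable_of_sum_le (c := ∏ k, ∑' i, f k i) product_nonneg fun u => ?_
  have u_subset : u ⊆ Fintype.piFinset fun k => u.image fun I => I k := fun I hI =>
    Fintype.mem_piFinset.2 fun k => mem_image_of_mem (fun I => I k) hI
  calc ∑ I ∈ u, ∏ k, f k (I k)
      ≤ ∑ I ∈ Fintype.piFinset fun k => u.image fun I => I k, ∏ k, f k (I k) :=
        sum_le_sum_of_subset_of_nonneg u_subset fun I _ _ => product_nonneg I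
    _ = ∏ k, ∑ i ∈ u.image fun I => I k, f k i := (prod_univ_sum _ _).symm
    _ ≤ ∏ k, ∑' i, f k i :=
        prod_le_prod (fun k _ => sum_nonneg fun i _ => hf_nonneg k i)
          fun k _ => (hf k).sum_le_tsum _ fun i _ => hf_nonneg k i

theorem summable_norm_exp_add_mul (t : ℝ) {z : ℂ} (hz : z.re < 0) {b : ℕ} (hb : 0 < b) :
    Summable fun i : ℕ+ => ‖Complex.exp (((i : ℕ) + t) * b * z)‖ := by
  have hbz : (b : ℝ) * z.re < 0 := mul_neg_of_pos_of_neg (Nat.cast_pos.2 hb) hz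
  have summable_nat : Summable fun n : ℕ => Real.exp (t * (b * z.re)) * Real.exp (n * (b * z.re)) :=
    (Real.summable_exp_nat_mul_iff.2 hbz).mul_left _
  refine (summable_nat.comp_injective PNat.coe_injective).congr fun i => ?_
  have re_exponent : ((((i : ℕ) : ℂ) + t) * b * z).re = t * (b * z.re) + (i : ℕ) * (b * z.re) := by
    norm_cast
    rw [Complex.re_ofReal_mul]
    ring
  rw [Function.comp_apply, ← Real.exp_add, Complex.norm_exp, re_exponent]

section PhiPS

open scoped MvPowerSeries.WithPiTopology

/-- The weight `exp ((i + t) b z) x_i ^ a` of the column `p = (a, b)` at the index `i`; the summand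
of `phiPS` at a tuple is the product of the weights of its entries. -/
noncomputable def columnWeight (t : ℝ) (z : ℂ) (i : ℕ+) (p : ℕ × ℕ) : MvPowerSeries ℕ+ ℂ :=
  MvPowerSeries.monomial (Finsupp.single i p.1) (Complex.exp (((i : ℕ) + t) * p.2 * z))

theorem columnWeight_add (t : ℝ) (z : ℂ) (i : ℕ+) (p q : ℕ × ℕ) :
    columnWeight t z i (p + q) = columnWeight t z i p * columnWeight t z i q := by
  rw [columnWeight, columnWeight, columnWeight, MvPowerSeries.monomial_mul_monomial,
    ← Complex.exp_add, ← Finsupp.single_add, Prod.fst_add, Prod.snd_add]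
  congr 2
  push_cast
  ring

theorem coeff_prod_columnWeight (t : ℝ) (z : ℂ) (μ : ℕ+ →₀ ℕ) {κ : Type*} [Fintype κ]
    (I : κ → ℕ+) (p : κ → ℕ × ℕ) :
    MvPowerSeries.coeff μ (∏ j, columnWeight t z (I j) (p j)) =
      if ∑ j, Finsupp.single (I j) (p j).1 = μ then
        Complex.exp ((∑ j, (((I j : ℕ) : ℂ) + t) * (p j).2) * z) else 0 := by
  simp only [columnWeight, MvPowerSeries.prod_monomial, MvPowerSeries.coeff_monomial, sum_mul,
    Complex.exp_sum, eq_comm (a := μ)]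

theorem summable_exp_sum_add_mul (t : ℝ) {z : ℂ} (hz : z.re < 0) {κ : Type*} [Fintype κ]
    {b : κ → ℕ} (hb : ∀ j, 0 < b j) :
    Summable fun I : κ → ℕ+ => Complex.exp ((∑ j, (((I j : ℕ) : ℂ) + t) * b j) * z) := by
  refine .of_norm ?_
  simpa only [sum_mul, Complex.exp_sum, norm_prod] using
    summable_prod_apply_of_nonneg (fun _ _ => norm_nonneg _)
      fun j => summable_norm_exp_add_mul t hz (hb j)

theorem hasSum_phiPS (t : ℝ) {z : ℂ} (hz : z.re < 0) {c : List (ℕ × ℕ)} (hc : ∀ p ∈ c, 0 < p.2) :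
    HasSum ({I | StrictMono I}.indicator fun I : Fin c.length → ℕ+ =>
      ∏ j, columnWeight t z (I j) (c.get j)) (phiPS c t z) := by
  refine MvPowerSeries.WithPiTopology.hasSum_iff_hasSum_coeff.2 fun μ => ?_
  have summable_exp := summable_exp_sum_add_mul t hz fun j => hc _ (c.get_mem j)
  have coeff_indicator : (fun I => MvPowerSeries.coeff μ ({I | StrictMono I}.indicator
      (fun I : Fin c.length → ℕ+ => ∏ j, columnWeight t z (I j) (c.get j)) I)) =
      {I | StrictMono I ∧ ∑ j, Finsupp.single (I j) (c.get j).1 = μ}.indicator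
        fun I => Complex.exp ((∑ j, (((I j : ℕ) : ℂ) + t) * (c.get j).2) * z) := by
    funext I
    simp only [Set.indicator_apply, Set.mem_ofPred_eq, apply_ite (MvPowerSeries.coeff μ), map_zero,
      coeff_prod_columnWeight, ite_and]
  rw [coeff_indicator]
  exact hasSum_subtype_iff_indicator.1 (summable_exp.subtype _).hasSum

theorem tendsto_phiPS (t : ℝ) {z : ℂ} (hz : z.re < 0) {c : List (ℕ × ℕ)}
    (hc : ∀ p ∈ c, 0 < p.2) :
    Filter.Tendsto (fun s => quasiMonomial (columnWeight t z) s c) Filter.atTop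
      (nhds (phiPS c t z)) :=
  tendsto_quasiMonomial (hasSum_phiPS t hz hc)

theorem stmt6_general (c c' : List (ℕ × ℕ)) (hc : ∀ p ∈ c, 0 < p.2) (hc' : ∀ p ∈ c', 0 < p.2)
    (t : ℝ) (z : ℂ) (hz : z.re < 0) :
    (∀ d ∈ (qsh c c').support, ∀ p ∈ d, 0 < p.2) ∧
    phiPS c t z * phiPS c' t z = (qsh c c').sum fun d q => q • phiPS d t z := by
  have support_pos : ∀ d ∈ (qsh c c').support, ∀ p ∈ d, 0 < p.2 :=
    forall_mem_of_mem_support_qsh (fun _ _ hp _ => Nat.add_pos_left hp _) hc hc'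
  exact ⟨support_pos, mul_eq_linearCombination_qsh_of_tendsto (F := fun d => phiPS d t z)
    (columnWeight_add t z) (tendsto_phiPS t hz hc) (tendsto_phiPS t hz hc')
    fun d hd => tendsto_phiPS t hz (support_pos d hd)⟩

end PhiPS

/-- For directed weak bicompositions (α;β), (α';β') (lists of columns with
positive second entries), every bicomposition occurring in the quasi-shuffle product
(α;β)*(α';β') over the monoid ℕ×ℕ is again a directed weak bicomposition, and for every
real t ≥ 0 and z ∈ ℂ with Re z < 0,
φ(α;β)(t,z) · φ(α';β')(t,z) = φ((α;β)*(α';β'))(t,z), where φ(·)(t,z) is extended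
ℚ-linearly. -/
theorem stmt6 (c c' : List (ℕ × ℕ)) (hc : ∀ p ∈ c, 0 < p.2) (hc' : ∀ p ∈ c', 0 < p.2)
    (t : ℝ) (ht : 0 ≤ t) (z : ℂ) (hz : z.re < 0) :
    (∀ d ∈ (qsh c c').support, ∀ p ∈ d, 0 < p.2) ∧
    phiPS c t z * phiPS c' t z = (qsh c c').sum fun d q => q • phiPS d t z :=
  stmt6_general c c' hc hc' t z hz
end

section
/- For left weak compositions α and α', every list occurring in the quasi-shuffle product α*α', taken over the additive monoid ℕ, is again a left weak composition, and M_α · M_{α'} = M_{α*α'} in ℚ[[X]], where M is extended ℚ-linearly to ℚ-linear combinations of left weak compositions. -/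
open Finset

/-- a left weak composition: empty or last entry positive -/
def LeftWeak (l : List ℕ) : Prop := ∀ a : ℕ, l.getLast? = some a → 0 < a

/-- the monomial (left weak) quasisymmetric function M_α of a weak composition α, as a formal
power series in ℚ[[X]]: its coefficient at a monomial μ is the number of strictly increasing
tuples I with x_I^α = μ (`Set.ncard` takes the value 0 on infinite sets). -/
noncomputable def Mqs (α : List ℕ) : MvPowerSeries ℕ+ ℚ :=
  fun μ => (Set.ncard {I : Fin α.length → ℕ+ | StrictMono I ∧
    (∑ j, Finsupp.single (I j) (α.get j)) = μ} : ℚ)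

/-!
Truncated to finitely many variables, `M_α` is an iterated sum over increasing index tuples, and
iterated sums of a family that is multiplicative in the letters obey the quasi-shuffle product over
any index set. A positive last exponent makes the variable of largest index visible in the monomial
`x_I^α`; so only finitely many `I` produce a given monomial, and `M_α` is the coefficientwise limit
of its truncations. The product formula passes to this limit because multiplication of power series
is continuous.
-/

section QuasiShuffle

variable {A : Type} [AddCommMonoid A]

theorem qsh_nil_left (β : List A) : qsh [] β = Finsupp.single β 1 := by rw [qsh]

theorem qsh_nil_right (α : List A) : qsh α [] = Finsupp.single α 1 := by cases α <;> rw [qsh]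

theorem mem_support_qsh_cons_cons {a b : A} {α β γ : List A}
    (hγ : γ ∈ (qsh (a :: α) (b :: β)).support) :
    (∃ δ ∈ (qsh α (b :: β)).support, γ = a :: δ) ∨
      (∃ δ ∈ (qsh (a :: α) β).support, γ = b :: δ) ∨
      ∃ δ ∈ (qsh α β).support, γ = (a + b) :: δ := by
  classical
  have exists_of_mem_mapDomain {c : A} {v : List A →₀ ℚ}
      (h : γ ∈ (v.mapDomain (c :: ·)).support) : ∃ δ ∈ v.support, γ = c :: δ := by
    obtain ⟨δ, hδ, rfl⟩ := mem_image.1 (Finsupp.mapDomain_support h)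
    exact ⟨δ, hδ, rfl⟩
  rw [qsh] at hγ
  rcases mem_union.1 (Finsupp.support_add hγ) with hγ | hγ
  · exact (mem_union.1 (Finsupp.support_add hγ)).imp exists_of_mem_mapDomain
      fun h => .inl (exists_of_mem_mapDomain h)
  · exact .inr (.inr (exists_of_mem_mapDomain hγ))

theorem eq_nil_of_nil_mem_support_qsh {α β : List A} (h : [] ∈ (qsh α β).support) :
    α = [] ∧ β = [] := by
  cases α with
  | nil => simpa [qsh_nil_left, Finsupp.single_apply] using h
  | cons a α =>
    cases β with
    | nil => simp [qsh_nil_right] at h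
    | cons b β => simpa using mem_support_qsh_cons_cons h

end QuasiShuffle

theorem leftWeak_cons {c : ℕ} {α : List ℕ} :
    LeftWeak (c :: α) ↔ LeftWeak α ∧ (α = [] → 0 < c) := by
  cases α <;> simp [LeftWeak]

theorem LeftWeak.of_mem_support_qsh {α β γ : List ℕ} (hα : LeftWeak α) (hβ : LeftWeak β)
    (hγ : γ ∈ (qsh α β).support) : LeftWeak γ := by
  induction α, β using qsh.induct generalizing γ with
  | case1 β =>
    rw [qsh_nil_left] at hγ
    rwa [mem_singleton.1 (Finsupp.support_single_subset hγ)]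
  | case2 a α =>
    rw [qsh_nil_right] at hγ
    rwa [mem_singleton.1 (Finsupp.support_single_subset hγ)]
  | case3 a α b β ih_left ih_right ih_add =>
    obtain ⟨hα', ha⟩ := leftWeak_cons.1 hα
    obtain ⟨hβ', -⟩ := leftWeak_cons.1 hβ
    rcases mem_support_qsh_cons_cons hγ with ⟨δ, hδ, rfl⟩ | ⟨δ, hδ, rfl⟩ | ⟨δ, hδ, rfl⟩
    · refine leftWeak_cons.2 ⟨ih_left hα' hβ hδ, ?_⟩
      rintro rfl
      cases (eq_nil_of_nil_mem_support_qsh hδ).2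
    · refine leftWeak_cons.2 ⟨ih_right hα hβ' hδ, ?_⟩
      rintro rfl
      cases (eq_nil_of_nil_mem_support_qsh hδ).1
    · refine leftWeak_cons.2 ⟨ih_add hα' hβ' hδ, ?_⟩
      rintro rfl
      exact Nat.add_pos_left (ha (eq_nil_of_nil_mem_support_qsh hδ).1) b

section IncreasingTuples

variable {ι : Type*} [LinearOrder ι]

open scoped Classical in
/-- The strictly increasing `k`-tuples with entries in the finite set `s`: the index set of the
truncated sums `iteratedSum`. -/
noncomputable def increasingTuples (s : Finset ι) (k : ℕ) : Finset (Fin k → ι) :=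
  {I ∈ Fintype.piFinset fun _ => s | StrictMono I}

theorem mem_increasingTuples {s : Finset ι} {k : ℕ} {I : Fin k → ι} :
    I ∈ increasingTuples s k ↔ (∀ j, I j ∈ s) ∧ StrictMono I := by
  simp [increasingTuples]

theorem increasingTuples_zero (s : Finset ι) : increasingTuples s 0 = univ := by
  ext I
  simp only [mem_increasingTuples, mem_univ, iff_true]
  exact ⟨fun j => j.elim0, Subsingleton.strictMono I⟩

theorem increasingTuples_empty_succ (k : ℕ) : increasingTuples (∅ : Finset ι) (k + 1) = ∅ := by
  ext I
  simp [mem_increasingTuples]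

theorem cons_mem_increasingTuples {s : Finset ι} {k : ℕ} {x : ι} {I : Fin k → ι} :
    (Fin.cons x I : Fin (k + 1) → ι) ∈ increasingTuples s (k + 1) ↔
      x ∈ s ∧ (∀ j, x < I j) ∧ I ∈ increasingTuples s k := by
  simp only [mem_increasingTuples, Fin.forall_fin_succ, Fin.cons_zero, Fin.cons_succ,
    Fin.strictMono_cons]
  tauto

theorem mem_increasingTuples_insert {s : Finset ι} {x : ι} {k : ℕ} {I : Fin k → ι}
    (hI : ∀ j, x < I j) : I ∈ increasingTuples (insert x s) k ↔ I ∈ increasingTuples s k := by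
  simp only [mem_increasingTuples, mem_insert, (hI _).ne', false_or]

theorem increasingTuples_insert_succ {s : Finset ι} {x : ι} (hx : ∀ i ∈ s, x < i) (k : ℕ) :
    increasingTuples (insert x s) (k + 1) =
      (increasingTuples s k).image (Fin.cons x) ∪ increasingTuples s (k + 1) := by
  ext I
  obtain ⟨y, J, rfl⟩ := Fin.exists_cons I
  have lt_of_mem (hJ : J ∈ increasingTuples s k) (j : Fin k) : x < J j :=
    hx _ ((mem_increasingTuples.1 hJ).1 j)
  simp only [mem_union, mem_image, cons_mem_increasingTuples, Fin.cons_inj]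
  constructor
  · rintro ⟨hy, hyJ, hJ⟩
    rcases mem_insert.1 hy with rfl | hy
    · exact .inl ⟨J, (mem_increasingTuples_insert hyJ).1 hJ, rfl, rfl⟩
    · have hxJ j := (hx y hy).trans (hyJ j)
      exact .inr ⟨hy, hyJ, (mem_increasingTuples_insert hxJ).1 hJ⟩
  · rintro (⟨J, hJ, rfl, rfl⟩ | ⟨hy, hyJ, hJ⟩)
    · exact ⟨mem_insert_self .., lt_of_mem hJ, (mem_increasingTuples_insert (lt_of_mem hJ)).2 hJ⟩
    · exact ⟨mem_insert_of_mem hy, hyJ, (mem_increasingTuples_insert (lt_of_mem hJ)).2 hJ⟩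

end IncreasingTuples

section IteratedSum

variable {ι A R : Type*} [LinearOrder ι] [CommSemiring R] (f : ι → A → R)

/-- The truncated iterated sum `∑_{i₁ < ⋯ < iₖ} f i₁ α₁ ⋯ f iₖ αₖ` over indices in the finite
set `s`. For `f i a = i ^ (-a)` these are truncated multiple zeta values; for `f i a = xᵢ ^ a`
they are the monomial quasisymmetric polynomials `truncMqs`. -/
noncomputable def iteratedSum (s : Finset ι) (α : List A) : R :=
  ∑ I ∈ increasingTuples s α.length, ∏ j, f (I j) (α.get j)

theorem iteratedSum_nil (s : Finset ι) : iteratedSum f s [] = 1 := by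
  simp [iteratedSum, increasingTuples_zero]

theorem iteratedSum_empty_cons (a : A) (α : List A) : iteratedSum f ∅ (a :: α) = 0 := by
  simp [iteratedSum, increasingTuples_empty_succ]

theorem iteratedSum_insert_cons {s : Finset ι} {x : ι} (hx : ∀ i ∈ s, x < i) (a : A)
    (α : List A) :
    iteratedSum f (insert x s) (a :: α) =
      f x a * iteratedSum f s α + iteratedSum f s (a :: α) := by
  have hdisj : Disjoint ((increasingTuples s α.length).image (Fin.cons x))
      (increasingTuples s (α.length + 1)) := by
    simp only [disjoint_left, mem_image, forall_exists_index, and_imp]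
    rintro _ I - rfl hI
    exact (hx x (cons_mem_increasingTuples.1 hI).1).false
  simp only [iteratedSum, List.length_cons]
  rw [increasingTuples_insert_succ hx, sum_union hdisj,
    sum_image (Fin.cons_right_injective (α := fun _ => ι) x).injOn, mul_sum]
  simp [Fin.prod_univ_succ]

end IteratedSum

section IteratedSumMul

variable {ι R : Type*} {A : Type} [LinearOrder ι] [CommRing R] [Algebra ℚ R]

theorem linearCombination_iteratedSum_insert_mapDomain_cons (f : ι → A → R) {s : Finset ι} {x : ι}
    (hx : ∀ i ∈ s, x < i) (c : A) (v : List A →₀ ℚ) :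
    Finsupp.linearCombination ℚ (iteratedSum f (insert x s)) (v.mapDomain (c :: ·)) =
      f x c * Finsupp.linearCombination ℚ (iteratedSum f s) v +
        Finsupp.linearCombination ℚ (iteratedSum f s) (v.mapDomain (c :: ·)) := by
  simp only [Finsupp.linearCombination_mapDomain]
  simp only [Finsupp.linearCombination_apply, Finsupp.sum, Function.comp_apply,
    iteratedSum_insert_cons f hx, smul_add, sum_add_distrib, mul_sum, mul_smul_comm]

variable [AddCommMonoid A]

/- Induct on the index set, adjoining a new minimum `x`. The index tuples of the two factors are
sorted by which of them start at `x`: only the first, only the second, both (the three terms of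
the quasi-shuffle recursion), or neither (the induction hypothesis). -/
theorem iteratedSum_mul {f : ι → A → R} (hf : ∀ i a b, f i (a + b) = f i a * f i b)
    (s : Finset ι) (α β : List A) :
    iteratedSum f s α * iteratedSum f s β =
      Finsupp.linearCombination ℚ (iteratedSum f s) (qsh α β) := by
  induction s using Finset.induction_on_min generalizing α β with
  | empty =>
    match α, β with
    | [], _ => simp [qsh_nil_left, iteratedSum_nil]
    | _, [] => simp [qsh_nil_right, iteratedSum_nil]
    | a :: α, b :: β =>
      have comp_cons (c : A) : iteratedSum f ∅ ∘ (c :: ·) = 0 :=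
        funext fun γ => iteratedSum_empty_cons f c γ
      simp [qsh, Finsupp.linearCombination_mapDomain, comp_cons, iteratedSum_empty_cons]
  | insert x s hx ih =>
    match α, β with
    | [], _ => simp [qsh_nil_left, iteratedSum_nil]
    | _, [] => simp [qsh_nil_right, iteratedSum_nil]
    | a :: α, b :: β =>
      have ih_cons := ih (a :: α) (b :: β)
      simp only [qsh, map_add] at ih_cons ⊢
      simp only [linearCombination_iteratedSum_insert_mapDomain_cons f hx, ← ih,
        iteratedSum_insert_cons f hx, hf]
      linear_combination ih_cons

end IteratedSumMul

/-- The truncation of `Mqs α` to the variables indexed by the finite set `s`. -/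
noncomputable def truncMqs (s : Finset ℕ+) (α : List ℕ) : MvPowerSeries ℕ+ ℚ :=
  iteratedSum (fun i a => MvPowerSeries.monomial (Finsupp.single i a) 1) s α

theorem truncMqs_mul (s : Finset ℕ+) (α β : List ℕ) :
    truncMqs s α * truncMqs s β = (qsh α β).sum fun γ q => q • truncMqs s γ :=
  iteratedSum_mul (fun i a b => by
    rw [MvPowerSeries.monomial_mul_monomial, ← Finsupp.single_add, one_mul]) s α β

theorem coeff_truncMqs (s : Finset ℕ+) (α : List ℕ) (μ : ℕ+ →₀ ℕ) :
    MvPowerSeries.coeff μ (truncMqs s α) =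
      #{I ∈ increasingTuples s α.length | ∑ j, Finsupp.single (I j) (α.get j) = μ} := by
  simp only [truncMqs, iteratedSum, MvPowerSeries.prod_monomial, prod_const_one, map_sum,
    MvPowerSeries.coeff_monomial, card_filter, Nat.cast_sum, Nat.cast_ite, Nat.cast_one,
    Nat.cast_zero, eq_comm]

theorem LeftWeak.exists_mem_support_ge {ι : Type*} [Preorder ι] {α : List ℕ} (hα : LeftWeak α)
    {I : Fin α.length → ι} (hI : Monotone I) (j : Fin α.length) :
    ∃ i ∈ (∑ j, Finsupp.single (I j) (α.get j)).support, I j ≤ i := by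
  have hlength : α.length - 1 < α.length := Nat.sub_one_lt_of_lt j.isLt
  let last : Fin α.length := ⟨α.length - 1, hlength⟩
  have hlast : 0 < α.get last := hα _ (by simp [List.getLast?_eq_getElem?, last])
  refine ⟨I last, ?_, hI (Nat.le_sub_one_of_lt j.isLt)⟩
  have hle : Finsupp.single (I last) (α.get last) ≤ ∑ j, Finsupp.single (I j) (α.get j) :=
    single_le_sum (f := fun j => Finsupp.single (I j) (α.get j)) (fun _ _ => zero_le)
      (mem_univ last)
  refine Finsupp.support_mono hle ?_
  simpa using hlast.ne'

theorem coeff_truncMqs_eq_coeff_Mqs {α : List ℕ} (hα : LeftWeak α) {μ : ℕ+ →₀ ℕ} {n : ℕ+}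
    (hn : ∀ i ∈ μ.support, i ≤ n) {s : Finset ℕ+} (hs : Iic n ⊆ s) :
    MvPowerSeries.coeff μ (truncMqs s α) = MvPowerSeries.coeff μ (Mqs α) := by
  change _ = ((Set.ncard _ : ℕ) : ℚ)
  rw [coeff_truncMqs, ← Set.ncard_coe_finset]
  congr 2
  ext I
  simp only [coe_filter, mem_increasingTuples, Set.mem_ofPred_eq]
  refine and_congr_left fun hμ => and_iff_right_of_imp fun hI j => hs (mem_Iic.2 ?_)
  obtain ⟨i, hi, hij⟩ := hα.exists_mem_support_ge hI.monotone j
  exact hij.trans (hn i (hμ ▸ hi))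

section Limit

open Filter Topology
open scoped MvPowerSeries.WithPiTopology

theorem tendsto_truncMqs {α : List ℕ} (hα : LeftWeak α) :
    Tendsto (truncMqs · α) atTop (𝓝 (Mqs α)) := by
  rw [MvPowerSeries.WithPiTopology.tendsto_iff_coeff_tendsto]
  intro μ
  obtain ⟨n, hn⟩ := μ.support.bddAbove
  refine tendsto_const_nhds.congr' ?_
  filter_upwards [eventually_ge_atTop (Iic n)] with s hs
  exact (coeff_truncMqs_eq_coeff_Mqs hα (fun i hi => hn hi) hs).symm

theorem Mqs_mul {α β : List ℕ} (hα : LeftWeak α) (hβ : LeftWeak β) :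
    Mqs α * Mqs β = (qsh α β).sum fun γ q => q • Mqs γ := by
  have hmul := (tendsto_truncMqs hα).mul (tendsto_truncMqs hβ)
  simp only [truncMqs_mul] at hmul
  refine tendsto_nhds_unique hmul (tendsto_finsetSum _ fun γ hγ => ?_)
  exact (tendsto_truncMqs (hα.of_mem_support_qsh hβ hγ)).const_smul _

end Limit

/-- For left weak compositions α, α', every list occurring in the
quasi-shuffle product α*α' over the additive monoid ℕ is again a left weak composition,
and M_α · M_{α'} = M_{α*α'} in ℚ[[X]], where M is extended ℚ-linearly. -/
theorem stmt17 (α α' : List ℕ) (h : LeftWeak α) (h' : LeftWeak α') :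
    (∀ γ ∈ (qsh α α').support, LeftWeak γ) ∧
    Mqs α * Mqs α' = (qsh α α').sum fun γ q => q • Mqs γ :=
  ⟨fun _ => h.of_mem_support_qsh h', Mqs_mul h h'⟩
end
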